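/- arXiv:2402.07816 — 2 statements merged into one kernel-verified Lean document; each statement's English description precedes it below -/
import Mathlib

section
/- Assume that A0 is a left Noetherian ring and that (V^α)_{α∈ℚ} is a V-filtration on M. Then for every α ∈ ℚ with α > 0, the restriction of T to V^α is a bijection from V^α onto V^{α+1}. -/
open Module

section VFiltration

variable {k : Type*} [Field k] [CharZero k]
variable {M : Type*} [AddCommGroup M] [Module k M]

/-- The subalgebra `A0 ⊆ End_k(M)` generated by `T`, `S = -(D∘T)` and the set `C`. -/
def VFilt.A0 (T D : Module.End k M) (C : Set (Module.End k M)) :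
    Subalgebra k (Module.End k M) :=
  Algebra.adjoin k ({T, -(D * T)} ∪ C)

/-- `V^{>α} = ⋃_{β > α} V^β`. -/
def VFilt.gt (V : ℚ → Submodule k M) (α : ℚ) : Submodule k M := ⨆ β > α, V β

/-- A weak `V`-filtration on `M` with respect to the data `T`, `D`, `C`. -/
structure IsWeakVFiltration (T D : Module.End k M) (C : Set (Module.End k M))
    (V : ℚ → Submodule k M) : Prop where
  /-- decreasing -/
  antitone : Antitone V
  /-- exhaustive -/
  exhaustive : ∀ m : M, ∃ α : ℚ, m ∈ V α
  /-- discrete and left-continuous -/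
  discrete : ∃ ℓ : ℕ, 0 < ℓ ∧ ∀ (i : ℤ) (α β : ℚ),
    α ∈ Set.Ioc ((i : ℚ) / ℓ) ((i + 1 : ℚ) / ℓ) →
    β ∈ Set.Ioc ((i : ℚ) / ℓ) ((i + 1 : ℚ) / ℓ) → V α = V β
  /-- each `V^α` is stable under every element of `A0` -/
  stable : ∀ a ∈ VFilt.A0 T D C, ∀ α : ℚ, (V α).map a ≤ V α
  /-- `T(V^α) ⊆ V^{α+1}` -/
  mapT_le : ∀ α : ℚ, (V α).map T ≤ V (α + 1)
  /-- `D(V^α) ⊆ V^{α-1}` -/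
  mapD_le : ∀ α : ℚ, (V α).map D ≤ V (α - 1)
  /-- `(S + α·id)^N (V^α) ⊆ V^{>α}` for some `N ≥ 1` -/
  nilpotent : ∀ α : ℚ, ∃ N : ℕ, 1 ≤ N ∧ ∀ u ∈ V α,
    ((-(D * T) + (α : k) • (1 : Module.End k M)) ^ N) u ∈ VFilt.gt V α

/-- A `V`-filtration on `M`: a weak `V`-filtration such that each `V^α` is a finitely
generated `A0`-module and `T(V^α) = V^{α+1}` for `α > 0`. -/
structure IsVFiltration (T D : Module.End k M) (C : Set (Module.End k M))
    (V : ℚ → Submodule k M) extends IsWeakVFiltration T D C V : Prop where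
  /-- each `V^α` is a finitely generated `A0`-module: it is the smallest `A0`-stable
  `k`-subspace containing some finite set -/
  fg : ∀ α : ℚ, ∃ F : Finset M, (↑F : Set M) ⊆ (V α : Set M) ∧
    ∀ W : Submodule k M, (∀ a ∈ VFilt.A0 T D C, W.map a ≤ W) →
      (↑F : Set M) ⊆ (W : Set M) → V α ≤ W
  /-- `T(V^α) = V^{α+1}` for `α > 0` -/
  mapT_eq : ∀ α : ℚ, 0 < α → (V α).map T = V (α + 1)

end VFiltration

/-!
An element `u ∈ V^α` with `α > 0` and `T u = 0` is killed by `S`, so `S + γ` acts on it as the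
scalar `γ`. Nilpotency of `S + γ` on `V^γ / V^{>γ}` then pushes `u` into `V^{>γ}` for every
`γ ≥ α`, and by discreteness into all `V^β`. As `V^{α+n} = T^n V^α`, we may write `u = T^n v` with
`v ∈ V^α ∩ ker T^{n+1}`, for each `n`. Since `T S = (S + 1) T`, one has `T A0 ⊆ A0 T`, so the
spaces `V^α ∩ ker T^n` form an ascending chain of `A0`-submodules of the Noetherian module `V^α`,
and `T^{n+1} v = 0` forces `u = T^n v = 0` once `n` is large.
-/

section Semiconjugates

/-- The one-sided normalization condition `f A ⊆ A f`. It makes the kernel of an endomorphism `f`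
stable under a ring `A` of endomorphisms although `f` need not be `A`-linear. -/
def Semiconjugates {B σ : Type*} [Mul B] [SetLike σ B] (f : B) (A : σ) : Prop :=
  ∀ a ∈ A, ∃ b ∈ A, SemiconjBy f a b

theorem Semiconjugates.pow {B σ : Type*} [Monoid B] [SetLike σ B] {f : B} {A : σ}
    (hf : Semiconjugates f A) (n : ℕ) : Semiconjugates (f ^ n) A := by
  induction n with
  | zero => exact fun a ha => ⟨a, ha, by simp only [pow_zero, SemiconjBy.one_left]⟩
  | succ n ih =>
    intro a ha
    obtain ⟨b, hb, hab⟩ := hf a ha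
    obtain ⟨c, hc, hbc⟩ := ih b hb
    exact ⟨c, hc, pow_succ f n ▸ hbc.mul_left hab⟩

theorem Semiconjugates.adjoin {R B : Type*} [CommSemiring R] [Semiring B] [Algebra R B]
    {f : B} {s : Set B} (hs : ∀ x ∈ s, ∃ y ∈ Algebra.adjoin R s, SemiconjBy f x y) :
    Semiconjugates f (Algebra.adjoin R s) := by
  intro a ha
  induction ha using Algebra.adjoin_induction with
  | mem x hx => exact hs x hx
  | algebraMap r =>
    exact ⟨algebraMap R B r, Subalgebra.algebraMap_mem _ r, Algebra.commute_algebraMap_right r f⟩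
  | add x y _ _ hx hy =>
    obtain ⟨x', hx', hxx'⟩ := hx
    obtain ⟨y', hy', hyy'⟩ := hy
    exact ⟨x' + y', add_mem hx' hy', hxx'.add_right hyy'⟩
  | mul x y _ _ hx hy =>
    obtain ⟨x', hx', hxx'⟩ := hx
    obtain ⟨y', hy', hyy'⟩ := hy
    exact ⟨x' * y', mul_mem hx' hy', hxx'.mul_right hyy'⟩

end Semiconjugates

section StableSubmodule

variable {R M : Type*}

/-- An `R`-submodule that is stable under an algebra `A` of endomorphisms, viewed as an
`A`-submodule; this gives access to the theory of Noetherian `A`-modules. -/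
def stableSubmodule [CommSemiring R] [AddCommMonoid M] [Module R M]
    (A : Subalgebra R (Module.End R M)) (W : Submodule R M) (hW : ∀ a ∈ A, W.map a ≤ W) :
    Submodule A M where
  __ := W.toAddSubmonoid
  smul_mem' a _ hx := hW a a.2 (Submodule.mem_map_of_mem hx)

theorem stableSubmodule_eq_span [CommSemiring R] [AddCommMonoid M] [Module R M]
    {A : Subalgebra R (Module.End R M)} {W : Submodule R M} (hW : ∀ a ∈ A, W.map a ≤ W)
    {F : Set M} (hF : F ⊆ W)
    (hmin : ∀ W' : Submodule R M, (∀ a ∈ A, W'.map a ≤ W') → F ⊆ W' → W ≤ W') :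
    stableSubmodule A W hW = Submodule.span A F := by
  refine le_antisymm (hmin ((Submodule.span A F).restrictScalars R) ?_ Submodule.subset_span)
    (Submodule.span_le.2 hF)
  rintro a ha _ ⟨x, hx, rfl⟩
  exact Submodule.smul_mem _ (⟨a, ha⟩ : A) hx

theorem Semiconjugates.map_ker_le [CommSemiring R] [AddCommMonoid M] [Module R M]
    {A : Subalgebra R (Module.End R M)} {f : Module.End R M} (hf : Semiconjugates f A) :
    ∀ a ∈ A, (LinearMap.ker f).map a ≤ LinearMap.ker f := by
  rintro a ha _ ⟨x, hx, rfl⟩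
  obtain ⟨b, -, hab⟩ := hf a ha
  calc f (a x) = b (f x) := LinearMap.congr_fun hab.eq x
    _ = 0 := by rw [LinearMap.mem_ker.1 hx, map_zero]

variable [CommRing R] [AddCommGroup M] [Module R M] {A : Subalgebra R (Module.End R M)}
  {f : Module.End R M}

theorem Semiconjugates.exists_pow_apply_eq_zero_of_pow_succ (hf : Semiconjugates f A)
    (P : Submodule A M) [IsNoetherian A P] :
    ∃ n : ℕ, ∀ v ∈ P, (f ^ (n + 1)) v = 0 → (f ^ n) v = 0 := by
  let K : ℕ →o Submodule A P :=
    { toFun := fun n =>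
        (stableSubmodule A (LinearMap.ker (f ^ n)) (hf.pow n).map_ker_le).comap P.subtype
      monotone' := fun _ _ hmn => Submodule.comap_mono (f.iterateKer.monotone hmn) }
  obtain ⟨n, hn⟩ := monotone_stabilizes_iff_noetherian.2 inferInstance K
  exact ⟨n, fun v hv hfv => (hn (n + 1) n.le_succ).ge (show (⟨v, hv⟩ : P) ∈ K (n + 1) from hfv)⟩

theorem Semiconjugates.eq_zero_of_forall_exists_pow_apply_eq (hf : Semiconjugates f A)
    (P : Submodule A M) [IsNoetherian A P] {u : M} (hfu : f u = 0)
    (hu : ∀ n : ℕ, ∃ v ∈ P, (f ^ n) v = u) : u = 0 := by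
  obtain ⟨n, hn⟩ := hf.exists_pow_apply_eq_zero_of_pow_succ P
  obtain ⟨v, hv, rfl⟩ := hu n
  exact hn v hv (by rw [pow_succ', Module.End.mul_apply, hfu])

end StableSubmodule

section Filtration

variable {k : Type*} [Field k] {M : Type*} [AddCommGroup M] [Module k M]
  {T D : Module.End k M} {C : Set (Module.End k M)} {V : ℚ → Submodule k M}

theorem VFilt.semiconjugates_A0 (hweyl : D * T - T * D = 1) (hC : ∀ c ∈ C, Commute c T) :
    Semiconjugates T (VFilt.A0 T D C) := by
  refine Semiconjugates.adjoin ?_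
  rintro x ((rfl | rfl) | hx)
  · exact ⟨x, Algebra.subset_adjoin (by simp), Commute.refl x⟩
  · refine ⟨-(D * T) + 1, add_mem (Algebra.subset_adjoin (by simp)) (one_mem _), ?_⟩
    rw [SemiconjBy, ← hweyl]
    noncomm_ring
  · exact ⟨x, Algebra.subset_adjoin (Or.inr hx), (hC x hx).symm⟩

namespace IsWeakVFiltration

theorem exists_gt_le (hV : IsWeakVFiltration T D C V) :
    ∃ ℓ : ℕ, 0 < ℓ ∧ ∀ (i : ℤ) (α : ℚ), (i : ℚ) / ℓ ≤ α → VFilt.gt V α ≤ V ((i + 1 : ℚ) / ℓ) := by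
  obtain ⟨ℓ, hℓ, hconst⟩ := hV.discrete
  refine ⟨ℓ, hℓ, fun i α hiα => iSup₂_le fun γ hαγ => ?_⟩
  obtain hγ | hγ := le_total γ ((i + 1 : ℚ) / ℓ)
  · have hiγ : (i : ℚ) / ℓ < γ := hiα.trans_lt hαγ
    exact (hconst i _ _ ⟨hiγ, hγ⟩ ⟨hiγ.trans_le hγ, le_rfl⟩).le
  · exact hV.antitone hγ

theorem mem_of_forall_mem_gt (hV : IsWeakVFiltration T D C V) {α : ℚ} {u : M} (hu : u ∈ V α)
    (hgt : ∀ γ, α ≤ γ → u ∈ V γ → u ∈ VFilt.gt V γ) (β : ℚ) : u ∈ V β := by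
  obtain ⟨ℓ, hℓ, hle⟩ := hV.exists_gt_le
  have hℓ₀ : (0 : ℚ) < ℓ := Nat.cast_pos.2 hℓ
  have hgrid : ∀ i : ℤ, ⌊α * ℓ⌋ + 1 ≤ i → u ∈ V (i / ℓ) := by
    refine Int.leInduction ?_ fun i hi hui => ?_
    · have hfloor : (⌊α * ℓ⌋ : ℚ) / ℓ ≤ α := (div_le_iff₀ hℓ₀).2 (Int.floor_le _)
      exact_mod_cast hle _ α hfloor (hgt α le_rfl hu)
    · have hαi : α ≤ i / ℓ := (le_div_iff₀ hℓ₀).2 (Int.floor_lt.1 (Int.lt_of_add_one_le hi)).le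
      exact_mod_cast hle i _ le_rfl (hgt _ hαi hui)
  obtain ⟨i, hαi, hβi⟩ : ∃ i : ℤ, ⌊α * ℓ⌋ + 1 ≤ i ∧ ⌈β * ℓ⌉ ≤ i :=
    ⟨max _ _, le_max_left _ _, le_max_right _ _⟩
  exact hV.antitone ((le_div_iff₀ hℓ₀).2 (Int.ceil_le.1 hβi)) (hgrid i hαi)

theorem mem_gt_of_apply_eq_zero [CharZero k] (hV : IsWeakVFiltration T D C V) {γ : ℚ}
    (hγ : γ ≠ 0) {u : M} (hu : u ∈ V γ) (hTu : T u = 0) : u ∈ VFilt.gt V γ := by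
  obtain ⟨N, -, hN⟩ := hV.nilpotent γ
  obtain rfl | hu₀ := eq_or_ne u 0
  · exact zero_mem _
  have heigen : (-(D * T) + (γ : k) • (1 : Module.End k M)).HasEigenvector (γ : k) u :=
    ⟨Module.End.mem_eigenspace_iff.2 (by simp [hTu]), hu₀⟩
  have hsmul : (γ : k) ^ N • u ∈ VFilt.gt V γ := heigen.pow_apply N ▸ hN u hu
  exact (Submodule.smul_mem_iff _ (pow_ne_zero N (Rat.cast_ne_zero.2 hγ))).1 hsmul

theorem mem_of_apply_eq_zero [CharZero k] (hV : IsWeakVFiltration T D C V) {α : ℚ}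
    (hα : 0 < α) {u : M} (hu : u ∈ V α) (hTu : T u = 0) (β : ℚ) : u ∈ V β :=
  hV.mem_of_forall_mem_gt hu
    (fun _ hαγ huγ => hV.mem_gt_of_apply_eq_zero (hα.trans_le hαγ).ne' huγ hTu) β

end IsWeakVFiltration

namespace IsVFiltration

theorem isNoetherian_stableSubmodule (hV : IsVFiltration T D C V)
    [IsNoetherianRing (VFilt.A0 T D C)] (α : ℚ) :
    IsNoetherian (VFilt.A0 T D C)
      (stableSubmodule (VFilt.A0 T D C) (V α) fun a ha => hV.stable a ha α) := by
  obtain ⟨F, hF, hmin⟩ := hV.fg α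
  exact isNoetherian_of_fg_of_noetherian _ ⟨F, (stableSubmodule_eq_span _ hF hmin).symm⟩

theorem map_pow_eq (hV : IsVFiltration T D C V) {α : ℚ} (hα : 0 < α) (n : ℕ) :
    (V α).map (T ^ n) = V (α + n) := by
  induction n with
  | zero => simp [Module.End.one_eq_id]
  | succ n ih =>
    rw [pow_succ', Module.End.mul_eq_comp, Submodule.map_comp, ih, hV.mapT_eq _ (by positivity),
      Nat.cast_succ, add_assoc]

theorem disjoint_ker [CharZero k] (hV : IsVFiltration T D C V)
    (hweyl : D * T - T * D = 1) (hC : ∀ c ∈ C, Commute c T)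
    [IsNoetherianRing (VFilt.A0 T D C)] {α : ℚ} (hα : 0 < α) :
    Disjoint (V α) (LinearMap.ker T) := by
  refine LinearMap.disjoint_ker.2 fun u hu hTu => ?_
  have hnoeth := hV.isNoetherian_stableSubmodule α
  refine (VFilt.semiconjugates_A0 hweyl hC).eq_zero_of_forall_exists_pow_apply_eq
    (stableSubmodule _ (V α) fun a ha => hV.stable a ha α) hTu fun n => ?_
  have hmem : u ∈ (V α).map (T ^ n) :=
    hV.map_pow_eq hα n ▸ hV.mem_of_apply_eq_zero hα hu hTu (α + n)
  exact Submodule.mem_map.1 hmem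

end IsVFiltration

end Filtration

theorem stmt6_general {k : Type*} [Field k] [CharZero k]
    {M : Type*} [AddCommGroup M] [Module k M]
    (T D : Module.End k M) (C : Set (Module.End k M))
    (hweyl : D * T - T * D = 1)
    (hC : ∀ c ∈ C, Commute c T)
    (hNoeth : IsNoetherianRing ↥(VFilt.A0 T D C))
    (V : ℚ → Submodule k M) (hV : IsVFiltration T D C V) :
    ∀ α : ℚ, 0 < α → Set.BijOn (⇑T) (V α : Set M) (V (α + 1) : Set M) := by
  intro α hα
  have hinj : Set.InjOn T (V α) :=
    LinearMap.injOn_of_disjoint_ker subset_rfl (hV.disjoint_ker hweyl hC hα)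
  rw [← hV.mapT_eq α hα, Submodule.map_coe]
  exact hinj.bijOn_image

/-- **Proposition 3.7(i).** If `A0` is left Noetherian and `V` is a `V`-filtration on `M`,
then for every `α > 0` the restriction of `T` is a bijection from `V^α` onto `V^{α+1}`. -/
theorem stmt6 {k : Type*} [Field k] [CharZero k]
    {M : Type*} [AddCommGroup M] [Module k M]
    (T D : Module.End k M) (C : Set (Module.End k M))
    (hweyl : D * T - T * D = 1)
    (hC : ∀ c ∈ C, Commute c T ∧ Commute c D)
    (hNoeth : IsNoetherianRing ↥(VFilt.A0 T D C))
    (V : ℚ → Submodule k M) (hV : IsVFiltration T D C V) :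
    ∀ α : ℚ, 0 < α → Set.BijOn (⇑T) (V α : Set M) (V (α + 1) : Set M) :=
  stmt6_general T D C hweyl (fun c hc => (hC c hc).1) hNoeth V hV
end

section
/- Let (V^α)_{α∈ℚ} be a V-filtration on M. Then M = V^1 + T(M) and V^1 ∩ T(M) = T(V^0); equivalently, the natural k-linear map V^1/T(V^0) → M/T(M) induced by the inclusion V^1 ⊆ M is an isomorphism. -/
open Module

/-!
Some power `(S + α)^N` maps `V^α` into `V^{>α}`. If `P` is an `S`-stable subspace and `S u ∈ P`,
then `(S + α)^N u ≡ α^N u` modulo `P`; with `P = V^β` this shows that, for `α ≠ 0` and `α < β`, a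
vector `u ∈ V^α` with `T u ∈ V^{β+1}` lies in `V^{>α}`, since `S u = -D (T u) ∈ V^β`. As
`S + α = -TD + (α - 1)`, the same congruence for `-TD` and `P = T(M)` shows `V^α ⊆ V^{>α} + T(M)`
for `α ≠ 1`. By discreteness, finitely many such steps lead from any `V^α` up to `V^0`,
respectively `V^1`.
-/

section PowAddSMul

variable {R M : Type*} [CommRing R] [AddCommGroup M] [Module R M]
variable {f : Module.End R M} {P W : Submodule R M} {a : R} {u : M}

theorem pow_add_smul_one_apply_sub_mem (hP : P ∈ f.invtSubmodule) (hu : f u ∈ P) (a : R) (N : ℕ) :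
    ((f + a • 1) ^ N) u - a ^ N • u ∈ P := by
  induction N with
  | zero => simp
  | succ N ih =>
    have step : ((f + a • 1) ^ (N + 1)) u - a ^ (N + 1) • u =
        (f + a • 1) (((f + a • 1) ^ N) u - a ^ N • u) + a ^ N • f u := by
      simp only [pow_succ' (f + a • 1), pow_succ a, Module.End.mul_apply, LinearMap.add_apply,
        LinearMap.smul_apply, Module.End.one_apply, map_sub, map_smul, mul_smul, smul_add]
      abel
    rw [step]
    exact P.add_mem (P.add_mem (hP ih) (P.smul_mem a ih)) (P.smul_mem _ hu)

theorem mem_sup_of_pow_add_smul_one_apply_mem (hP : P ∈ f.invtSubmodule) (hu : f u ∈ P)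
    (ha : IsUnit a) {N : ℕ} (hW : ((f + a • 1) ^ N) u ∈ W) : u ∈ W ⊔ P := by
  have hsmul : a ^ N • u ∈ W ⊔ P := by
    rw [← sub_sub_cancel (((f + a • 1) ^ N) u) (a ^ N • u)]
    exact sub_mem (Submodule.mem_sup_left hW)
      (Submodule.mem_sup_right (pow_add_smul_one_apply_sub_mem hP hu a N))
  exact ((W ⊔ P).smul_mem_iff_of_isUnit (ha.pow N)).mp hsmul

end PowAddSMul

namespace VFilt

/-- A family indexed by `ℚ` is discrete and left-continuous with denominator `ℓ` if it is constant
on each interval `(i/ℓ, (i+1)/ℓ]`. It is determined by its values at the multiples of `1/ℓ`. -/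
def ConstOnSteps {X : Type*} (V : ℚ → X) (ℓ : ℕ) : Prop :=
  ∀ (i : ℤ) (α β : ℚ), α ∈ Set.Ioc ((i : ℚ) / ℓ) ((i + 1 : ℚ) / ℓ) →
    β ∈ Set.Ioc ((i : ℚ) / ℓ) ((i + 1 : ℚ) / ℓ) → V α = V β

theorem div_lt_add_one_div {ℓ : ℕ} (hℓ : 0 < ℓ) (i : ℤ) : (i : ℚ) / ℓ < (i + 1 : ℚ) / ℓ := by
  gcongr
  exact lt_add_one _

theorem ConstOnSteps.eq_ceil_div {X : Type*} {V : ℚ → X} {ℓ : ℕ} (h : ConstOnSteps V ℓ)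
    (hℓ : 0 < ℓ) (α : ℚ) : V α = V (⌈α * ℓ⌉ / ℓ) := by
  have hℓ' : (0 : ℚ) < ℓ := Nat.cast_pos.mpr hℓ
  have hlt := div_lt_add_one_div hℓ (⌈α * ℓ⌉ - 1)
  refine h (⌈α * ℓ⌉ - 1) _ _ ⟨?_, ?_⟩ ⟨?_, ?_⟩
  · rw [div_lt_iff₀ hℓ']
    push_cast
    linarith [Int.ceil_lt_add_one (α * ℓ)]
  · rw [le_div_iff₀ hℓ']
    push_cast
    linarith [Int.le_ceil (α * ℓ)]
  · simpa using hlt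
  · simp

variable {k M : Type*} [Field k] [AddCommGroup M] [Module k M] {V : ℚ → Submodule k M}

theorem le_gt {α β : ℚ} (h : α < β) : V β ≤ gt V α :=
  le_iSup₂_of_le (f := fun γ (_ : γ > α) => V γ) β h le_rfl

theorem ConstOnSteps.gt_div {ℓ : ℕ} (h : ConstOnSteps V ℓ) (hℓ : 0 < ℓ) (hanti : Antitone V)
    (i : ℤ) : gt V (i / ℓ) = V ((i + 1) / ℓ) := by
  have hlt := div_lt_add_one_div hℓ i
  refine le_antisymm (iSup₂_le fun β hβ => ?_) (le_gt hlt)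
  rcases le_total β ((i + 1 : ℚ) / ℓ) with hle | hle
  · exact (h i β _ ⟨hβ, hle⟩ ⟨hlt, le_rfl⟩).le
  · exact hanti hle

theorem ConstOnSteps.induction_down {ℓ : ℕ} (h : ConstOnSteps V ℓ) (hℓ : 0 < ℓ)
    (hanti : Antitone V) {p : Submodule k M → Prop} {β : ℚ} (base : p (V β))
    (step : ∀ α < β, p (gt V α) → p (V α)) {α : ℚ} (hα : α ≤ β) : p (V α) := by
  have hmultiples : ∀ i ≤ ⌈β * ℓ⌉, p (V (i / ℓ)) := by
    intro i hi
    induction i, hi using Int.leInductionDown with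
    | base => rwa [← h.eq_ceil_div hℓ]
    | pred i hi ih =>
      have hlt : ((i - 1 : ℤ) : ℚ) / ℓ < β := by
        rw [div_lt_iff₀ (Nat.cast_pos.mpr hℓ)]
        exact Int.lt_ceil.mp (Int.sub_one_lt_iff.mpr hi)
      refine step _ hlt ?_
      rw [h.gt_div hℓ hanti]
      simpa using ih
  rw [h.eq_ceil_div hℓ]
  exact hmultiples _ (Int.ceil_le_ceil (by gcongr))

end VFilt

namespace IsWeakVFiltration

open VFilt

variable {k M : Type*} [Field k] [AddCommGroup M] [Module k M]
variable {T D : Module.End k M} {C : Set (Module.End k M)} {V : ℚ → Submodule k M}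

theorem exists_le_mem (hV : IsWeakVFiltration T D C V) (β : ℚ) (m : M) : ∃ α ≤ β, m ∈ V α := by
  obtain ⟨α, hα⟩ := hV.exhaustive m
  exact ⟨min α β, min_le_right α β, hV.antitone (min_le_left α β) hα⟩

theorem induction_down (hV : IsWeakVFiltration T D C V) {p : Submodule k M → Prop} {β : ℚ}
    (base : p (V β)) (step : ∀ α < β, p (gt V α) → p (V α)) {α : ℚ} (hα : α ≤ β) : p (V α) := by
  obtain ⟨ℓ, hℓ, h⟩ := hV.discrete
  exact ConstOnSteps.induction_down h hℓ hV.antitone base step hα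

theorem mem_invtSubmodule_neg_mul (hV : IsWeakVFiltration T D C V) (α : ℚ) :
    V α ∈ (-(D * T)).invtSubmodule :=
  (Module.End.mem_invtSubmodule_iff_map_le _).mpr
    (hV.stable _ (Algebra.subset_adjoin (by simp)) α)

theorem neg_mul_apply_mem (hV : IsWeakVFiltration T D C V) {α : ℚ} {u : M}
    (hu : T u ∈ V (α + 1)) : (-(D * T)) u ∈ V α := by
  have hDT : D (T u) ∈ V (α + 1 - 1) := hV.mapD_le (α + 1) ⟨T u, hu, rfl⟩
  simpa using hDT

variable [CharZero k]

theorem le_gt_sup_range_T (hweyl : D * T - T * D = 1) (hV : IsWeakVFiltration T D C V)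
    {α : ℚ} (hα : α ≠ 1) : V α ≤ gt V α ⊔ LinearMap.range T := by
  intro u hu
  obtain ⟨N, -, hN⟩ := hV.nilpotent α
  have hshift : -(D * T) + (α : k) • (1 : Module.End k M) =
      -(T * D) + ((α - 1 : ℚ) : k) • (1 : Module.End k M) := by
    rw [sub_eq_iff_eq_add.mp hweyl, Rat.cast_sub, Rat.cast_one, sub_smul, one_smul]
    abel
  have hrange : ∀ v, (-(T * D)) v ∈ LinearMap.range T := fun v => ⟨-(D v), by simp⟩
  have hunit : IsUnit ((α - 1 : ℚ) : k) :=
    (Rat.cast_ne_zero.mpr (sub_ne_zero.mpr hα)).isUnit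
  exact mem_sup_of_pow_add_smul_one_apply_mem (fun v _ => hrange v) (hrange u) hunit
    (hshift ▸ hN u hu)

theorem inf_comap_T_le_gt (hV : IsWeakVFiltration T D C V) {α β : ℚ} (hα : α ≠ 0) (hαβ : α < β) :
    V α ⊓ (V (β + 1)).comap T ≤ gt V α := by
  rintro u ⟨hu, hTu⟩
  obtain ⟨N, -, hN⟩ := hV.nilpotent α
  have hsup : u ∈ gt V α ⊔ V β :=
    mem_sup_of_pow_add_smul_one_apply_mem (hV.mem_invtSubmodule_neg_mul β)
      (hV.neg_mul_apply_mem hTu) (Rat.cast_ne_zero.mpr hα).isUnit (hN u hu)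
  rwa [sup_eq_left.mpr (le_gt hαβ)] at hsup

theorem sup_range_T_eq_top (hweyl : D * T - T * D = 1) (hV : IsWeakVFiltration T D C V)
    {β : ℚ} (hβ : β ≤ 1) : V β ⊔ LinearMap.range T = ⊤ := by
  refine Submodule.eq_top_iff'.mpr fun m => ?_
  obtain ⟨α, hα, hm⟩ := hV.exists_le_mem β m
  refine hV.induction_down (p := (· ≤ V β ⊔ LinearMap.range T)) le_sup_left ?_ hα hm
  intro γ hγ ih
  exact (le_gt_sup_range_T hweyl hV (hγ.trans_le hβ).ne).trans (sup_le ih le_sup_right)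

theorem comap_T_le (hV : IsWeakVFiltration T D C V) {β : ℚ} (hβ : β ≤ 0) :
    (V (β + 1)).comap T ≤ V β := by
  intro m hTm
  obtain ⟨α, hα, hm⟩ := hV.exists_le_mem β m
  refine hV.induction_down (p := (· ⊓ (V (β + 1)).comap T ≤ V β)) inf_le_left ?_ hα ⟨hm, hTm⟩
  intro γ hγ ih
  exact (le_inf (hV.inf_comap_T_le_gt (hγ.trans_le hβ).ne hγ) inf_le_right).trans ih

theorem inf_range_T_eq_map (hV : IsWeakVFiltration T D C V) {β : ℚ} (hβ : β ≤ 0) :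
    V (β + 1) ⊓ LinearMap.range T = (V β).map T := by
  refine le_antisymm ?_ (le_inf (hV.mapT_le β) LinearMap.map_le_range)
  rw [inf_comm, ← Submodule.map_comap_eq]
  exact Submodule.map_mono (hV.comap_T_le hβ)

end IsWeakVFiltration

theorem stmt9_general {k : Type*} [Field k] [CharZero k]
    {M : Type*} [AddCommGroup M] [Module k M]
    (T D : Module.End k M) (C : Set (Module.End k M))
    (hweyl : D * T - T * D = 1)
    (V : ℚ → Submodule k M) (hV : IsWeakVFiltration T D C V) (α : ℚ) (hα : α ≤ 0) :
    V (α + 1) ⊔ LinearMap.range T = ⊤ ∧ V (α + 1) ⊓ LinearMap.range T = (V α).map T :=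
  ⟨hV.sup_range_T_eq_top hweyl (by linarith), hV.inf_range_T_eq_map hα⟩

/-- **Proposition 3.10.** `M = V^1 + T(M)` and `V^1 ∩ T(M) = T(V^0)`. -/
theorem stmt9 {k : Type*} [Field k] [CharZero k]
    {M : Type*} [AddCommGroup M] [Module k M]
    (T D : Module.End k M) (C : Set (Module.End k M))
    (hweyl : D * T - T * D = 1)
    (hC : ∀ c ∈ C, Commute c T ∧ Commute c D)
    (V : ℚ → Submodule k M) (hV : IsVFiltration T D C V) :
    V 1 ⊔ LinearMap.range T = ⊤ ∧ V 1 ⊓ LinearMap.range T = (V 0).map T := by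
  simpa only [zero_add] using stmt9_general T D C hweyl V hV.toIsWeakVFiltration 0 le_rfl
end
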